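/- arXiv:1605.06384 — 3 statements merged into one kernel-verified Lean document; each statement's English description precedes it below -/
import Mathlib

section
/- Let B be a non-degenerate, idempotent algebra over the complex numbers and let ω be a faithful functional on B. Then ω admits a modular automorphism, i.e. there exists an algebra automorphism σ of B such that ω(ab) = ω(bσ(a)) for all a, b in B, if and only if B·ω = ω·B as subsets of the linear dual of B. -/
/-- Let `B` be a non-degenerate, idempotent (not necessarily unital) algebra over `ℂ` and
let `ω` be a faithful linear functional on `B`.  Then `ω` admits a modular automorphism,
i.e. there is an algebra automorphism `σ` of `B` with `ω (a*b) = ω (b * σ a)` for all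
`a b`, if and only if `B·ω = ω·B` as subsets of the linear dual of `B`, where
`(a·ω) c = ω (c*a)` and `(ω·b) c = ω (b*c)`. -/
theorem statement1
    (B : Type*) [NonUnitalRing B] [Module ℂ B]
    [SMulCommClass ℂ B B] [IsScalarTower ℂ B B]
    (h_nd : ∀ b : B, b ≠ 0 → (∃ a : B, a * b ≠ 0) ∧ (∃ a' : B, b * a' ≠ 0))
    (h_idem : Submodule.span ℂ {x : B | ∃ a b : B, a * b = x} = ⊤)
    (ω : B →ₗ[ℂ] ℂ)
    (h_faithful : ∀ d : B, d ≠ 0 →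
      (∃ b : B, ω (d * b) ≠ 0) ∧ (∃ b' : B, ω (b' * d) ≠ 0)) :
    (∃ σ : B ≃ₗ[ℂ] B, (∀ a b : B, σ (a * b) = σ a * σ b) ∧
        (∀ a b : B, ω (a * b) = ω (b * σ a))) ↔
      {f : B →ₗ[ℂ] ℂ | ∃ a : B, ∀ c : B, f c = ω (c * a)} =
        {f : B →ₗ[ℂ] ℂ | ∃ b : B, ∀ c : B, f c = ω (b * c)} := by
  have hR : ∀ x y : B, (∀ c, ω (c * x) = ω (c * y)) → x = y := by
    intro x y h
    by_contra hne
    obtain ⟨c, hc⟩ := (h_faithful (x - y) (sub_ne_zero.2 hne)).2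
    exact hc (by rw [mul_sub, map_sub, h, sub_self])
  have hL : ∀ x y : B, (∀ c, ω (x * c) = ω (y * c)) → x = y := by
    intro x y h
    by_contra hne
    obtain ⟨c, hc⟩ := (h_faithful (x - y) (sub_ne_zero.2 hne)).1
    exact hc (by rw [sub_mul, map_sub, h, sub_self])
  constructor
  · rintro ⟨σ, -, hσ⟩
    ext f
    constructor
    · rintro ⟨a, ha⟩
      refine ⟨σ.symm a, fun c => ?_⟩
      rw [hσ, ha, LinearEquiv.apply_symm_apply]
    · rintro ⟨b, hb⟩
      exact ⟨σ b, fun c => by rw [hb, hσ]⟩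
  · intro h
    have h1 : ∀ a : B, ∃ a' : B, ∀ c, ω (a * c) = ω (c * a') := by
      intro a
      have : (ω ∘ₗ LinearMap.mulLeft ℂ a) ∈
          {f : B →ₗ[ℂ] ℂ | ∃ a : B, ∀ c : B, f c = ω (c * a)} := by
        rw [h]
        exact ⟨a, fun c => rfl⟩
      obtain ⟨a', ha'⟩ := this
      exact ⟨a', fun c => ha' c⟩
    have h2 : ∀ a : B, ∃ a' : B, ∀ c, ω (c * a) = ω (a' * c) := by
      intro a
      have : (ω ∘ₗ LinearMap.mulRight ℂ a) ∈
          {f : B →ₗ[ℂ] ℂ | ∃ b : B, ∀ c : B, f c = ω (b * c)} := by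
        rw [← h]
        exact ⟨a, fun c => rfl⟩
      obtain ⟨a', ha'⟩ := this
      exact ⟨a', fun c => ha' c⟩
    choose s hs using h1
    choose t ht using h2
    refine ⟨{ toFun := s, invFun := t, map_add' := ?_, map_smul' := ?_,
              left_inv := ?_, right_inv := ?_ }, ?_, ?_⟩
    · intro x y
      apply hR
      intro c
      rw [← hs, mul_add, add_mul, map_add, map_add, hs x, hs y]
    · intro r x
      apply hR
      intro c
      rw [← hs, RingHom.id_apply, smul_mul_assoc, mul_smul_comm, map_smul, map_smul, hs]
    · intro x
      apply hL
      intro c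
      rw [← ht, ← hs]
    · intro x
      apply hR
      intro c
      rw [← hs, ← ht]
    · intro a b
      change s (a * b) = s a * s b
      apply hR
      intro c
      rw [← hs, mul_assoc, hs a, mul_assoc, hs b, mul_assoc]
    · intro a b
      exact hs a b
end

section
/- Let B and C be idempotent algebras over the complex numbers with faithful functionals μ_B and μ_C, and let M be an idempotent B-C-bimodule. A functional ω on M is factorizable with respect to μ_B and μ_C if and only if there exist linear maps f : M → B and g : M → C such that ω(xm) = μ_B(x f(m)) and ω(my) = μ_C(g(m) y) for all x in B, y in C and m in M; in that case f and g are automatically a left B-module map and a right C-module map with μ_B∘f = ω = μ_C∘g. -/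
/-- Let `B`, `C` be idempotent algebras over `ℂ` with faithful functionals `μB`, `μC`, and
let `M` be an idempotent `B`-`C`-bimodule (with `ℂ`-bilinear commuting actions
`l : B → M → M` and `r : M → C → M`).  A functional `ω` on `M` is factorizable with
respect to `μB` and `μC` — i.e. there exist a left `B`-module map `f : M → B` and a
right `C`-module map `g : M → C` with `μB ∘ f = ω = μC ∘ g` — if and only if there
exist linear maps `f : M → B`, `g : M → C` such that `ω (x·m) = μB (x * f m)` and
`ω (m·y) = μC (g m * y)` for all `x, y, m`; and in that case any such `f`, `g` are
automatically a left `B`-module map and a right `C`-module map with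
`μB ∘ f = ω = μC ∘ g`. -/
theorem statement4
    (B : Type*) [NonUnitalRing B] [Module ℂ B]
    [SMulCommClass ℂ B B] [IsScalarTower ℂ B B]
    (C : Type*) [NonUnitalRing C] [Module ℂ C]
    [SMulCommClass ℂ C C] [IsScalarTower ℂ C C]
    (h_idem_B : Submodule.span ℂ {x : B | ∃ a b : B, a * b = x} = ⊤)
    (h_idem_C : Submodule.span ℂ {x : C | ∃ a b : C, a * b = x} = ⊤)
    (μB : B →ₗ[ℂ] ℂ) (μC : C →ₗ[ℂ] ℂ)
    (hμB : ∀ d : B, d ≠ 0 → (∃ b : B, μB (d * b) ≠ 0) ∧ (∃ b' : B, μB (b' * d) ≠ 0))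
    (hμC : ∀ d : C, d ≠ 0 → (∃ b : C, μC (d * b) ≠ 0) ∧ (∃ b' : C, μC (b' * d) ≠ 0))
    (M : Type*) [AddCommGroup M] [Module ℂ M]
    (l : B →ₗ[ℂ] M →ₗ[ℂ] M) (r : M →ₗ[ℂ] C →ₗ[ℂ] M)
    (h_l : ∀ (a b : B) (m : M), l (a * b) m = l a (l b m))
    (h_r : ∀ (m : M) (y y' : C), r (r m y) y' = r m (y * y'))
    (h_lr : ∀ (a : B) (m : M) (y : C), r (l a m) y = l a (r m y))
    (h_BM : Submodule.span ℂ {m : M | ∃ (x : B) (m' : M), l x m' = m} = ⊤)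
    (h_MC : Submodule.span ℂ {m : M | ∃ (m' : M) (y : C), r m' y = m} = ⊤)
    (ω : M →ₗ[ℂ] ℂ) :
    ((∃ (f : M →ₗ[ℂ] B) (g : M →ₗ[ℂ] C),
        (∀ (x : B) (m : M), f (l x m) = x * f m) ∧
        (∀ (m : M) (y : C), g (r m y) = g m * y) ∧
        (∀ m : M, μB (f m) = ω m) ∧ (∀ m : M, μC (g m) = ω m)) ↔
      (∃ (f : M →ₗ[ℂ] B) (g : M →ₗ[ℂ] C),
        (∀ (x : B) (m : M), ω (l x m) = μB (x * f m)) ∧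
        (∀ (m : M) (y : C), ω (r m y) = μC (g m * y)))) ∧
    (∀ (f : M →ₗ[ℂ] B) (g : M →ₗ[ℂ] C),
      (∀ (x : B) (m : M), ω (l x m) = μB (x * f m)) →
      (∀ (m : M) (y : C), ω (r m y) = μC (g m * y)) →
      ((∀ (x : B) (m : M), f (l x m) = x * f m) ∧
        (∀ (m : M) (y : C), g (r m y) = g m * y) ∧
        (∀ m : M, μB (f m) = ω m) ∧ (∀ m : M, μC (g m) = ω m))) := by
  have key : ∀ (f : M →ₗ[ℂ] B) (g : M →ₗ[ℂ] C),
      (∀ (x : B) (m : M), ω (l x m) = μB (x * f m)) →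
      (∀ (m : M) (y : C), ω (r m y) = μC (g m * y)) →
      ((∀ (x : B) (m : M), f (l x m) = x * f m) ∧
        (∀ (m : M) (y : C), g (r m y) = g m * y) ∧
        (∀ m : M, μB (f m) = ω m) ∧ (∀ m : M, μC (g m) = ω m)) := by
    intro f g hf hg
    have h1 : ∀ (x : B) (m : M), f (l x m) = x * f m := by
      intro x m
      by_contra h
      obtain ⟨b, hb⟩ := (hμB _ (sub_ne_zero.mpr h)).2
      apply hb
      rw [mul_sub, map_sub, ← hf, ← mul_assoc, ← hf, h_l, sub_self]
    have h2 : ∀ (m : M) (y : C), g (r m y) = g m * y := by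
      intro m y
      by_contra h
      obtain ⟨b, hb⟩ := (hμC _ (sub_ne_zero.mpr h)).1
      apply hb
      rw [sub_mul, map_sub, ← hg, mul_assoc, ← hg, h_r, sub_self]
    refine ⟨h1, h2, ?_, ?_⟩
    · have : μB ∘ₗ f = ω := by
        apply LinearMap.ext_on h_BM
        rintro _ ⟨x, m, rfl⟩
        rw [LinearMap.comp_apply, h1, hf]
      exact fun m => LinearMap.congr_fun this m
    · have : μC ∘ₗ g = ω := by
        apply LinearMap.ext_on h_MC
        rintro _ ⟨m, y, rfl⟩
        rw [LinearMap.comp_apply, h2, hg]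
      exact fun m => LinearMap.congr_fun this m
  refine ⟨⟨?_, ?_⟩, key⟩
  · rintro ⟨f, g, h1, h2, h3, h4⟩
    exact ⟨f, g, fun x m => by rw [← h1, h3], fun m y => by rw [← h2, h4]⟩
  · rintro ⟨f, g, hf, hg⟩
    exact ⟨f, g, key f g hf hg⟩
end

section
/- Let B and C be idempotent algebras over the complex numbers with faithful functionals μ_B and μ_C which admit modular automorphisms σ_B and σ_C respectively, and let M be an idempotent B-C-bimodule. If ω is a factorizable functional on M with factorizations _Bω : M → B and ω_C : M → C, then for every x in B and y in C the functional ω' on M defined by ω'(m) = ω(x m y) is again factorizable, with left factorization _Bω'(m) = _Bω(my)·σ_B(x) and right factorization ω'_C(m) = σ_C^{-1}(y)·ω_C(xm) for all m in M. In particular, the factorizable functionals on M form a sub-bimodule of the linear dual of M under this action of C on the left and B on the right. -/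
/-- Let `B`, `C` be idempotent algebras over `ℂ` with faithful functionals `μB`, `μC`
admitting modular automorphisms `σB`, `σC`, and let `M` be an idempotent
`B`-`C`-bimodule.  If `ω` is a factorizable functional on `M` with factorizations
`f : M → B` (left) and `g : M → C` (right), then for every `x ∈ B`, `y ∈ C` the
functional `ω' : m ↦ ω (x·m·y)` is again factorizable, with left factorization
`m ↦ f (m·y) * σB x` and right factorization `m ↦ σC⁻¹ y * g (x·m)`.
In particular, the factorizable functionals on `M` form a sub-bimodule of the linear
dual of `M` under this action of `C` on the left and `B` on the right. -/
theorem statement7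
    (B : Type*) [NonUnitalRing B] [Module ℂ B]
    [SMulCommClass ℂ B B] [IsScalarTower ℂ B B]
    (C : Type*) [NonUnitalRing C] [Module ℂ C]
    [SMulCommClass ℂ C C] [IsScalarTower ℂ C C]
    (h_idem_B : Submodule.span ℂ {x : B | ∃ a b : B, a * b = x} = ⊤)
    (h_idem_C : Submodule.span ℂ {x : C | ∃ a b : C, a * b = x} = ⊤)
    (μB : B →ₗ[ℂ] ℂ) (μC : C →ₗ[ℂ] ℂ)
    (hμB : ∀ d : B, d ≠ 0 → (∃ b : B, μB (d * b) ≠ 0) ∧ (∃ b' : B, μB (b' * d) ≠ 0))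
    (hμC : ∀ d : C, d ≠ 0 → (∃ b : C, μC (d * b) ≠ 0) ∧ (∃ b' : C, μC (b' * d) ≠ 0))
    -- modular automorphisms of μB and μC
    (σB : B ≃ₗ[ℂ] B) (hσB_mul : ∀ a b : B, σB (a * b) = σB a * σB b)
    (hσB : ∀ a b : B, μB (a * b) = μB (b * σB a))
    (σC : C ≃ₗ[ℂ] C) (hσC_mul : ∀ a b : C, σC (a * b) = σC a * σC b)
    (hσC : ∀ a b : C, μC (a * b) = μC (b * σC a))
    -- the idempotent B-C-bimodule M
    (M : Type*) [AddCommGroup M] [Module ℂ M]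
    (l : B →ₗ[ℂ] M →ₗ[ℂ] M) (r : M →ₗ[ℂ] C →ₗ[ℂ] M)
    (h_l : ∀ (a b : B) (m : M), l (a * b) m = l a (l b m))
    (h_r : ∀ (m : M) (y y' : C), r (r m y) y' = r m (y * y'))
    (h_lr : ∀ (a : B) (m : M) (y : C), r (l a m) y = l a (r m y))
    (h_BM : Submodule.span ℂ {m : M | ∃ (x : B) (m' : M), l x m' = m} = ⊤)
    (h_MC : Submodule.span ℂ {m : M | ∃ (m' : M) (y : C), r m' y = m} = ⊤)
    -- ω factorizable with factorizations f and g
    (ω : M →ₗ[ℂ] ℂ) (f : M →ₗ[ℂ] B) (g : M →ₗ[ℂ] C)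
    (hf : ∀ (x : B) (m : M), f (l x m) = x * f m)
    (hg : ∀ (m : M) (y : C), g (r m y) = g m * y)
    (hfω : ∀ m : M, μB (f m) = ω m) (hgω : ∀ m : M, μC (g m) = ω m) :
    ∀ (x : B) (y : C),
      ∃ (F : M →ₗ[ℂ] B) (G : M →ₗ[ℂ] C),
        (∀ m : M, F m = f (r m y) * σB x) ∧
        (∀ m : M, G m = σC.symm y * g (l x m)) ∧
        (∀ (a : B) (m : M), F (l a m) = a * F m) ∧
        (∀ (m : M) (c : C), G (r m c) = G m * c) ∧
        (∀ m : M, μB (F m) = ω (l x (r m y))) ∧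
        (∀ m : M, μC (G m) = ω (l x (r m y))) := by
  intro x y
  refine ⟨(LinearMap.mulRight ℂ (σB x)).comp (f.comp (r.flip y)),
    (LinearMap.mulLeft ℂ (σC.symm y)).comp (g.comp (l x)), ?_, ?_, ?_, ?_, ?_, ?_⟩
  · intro m
    simp
  · intro m
    simp
  · intro a m
    simp [h_lr, hf, mul_assoc]
  · intro m c
    simp [← h_lr, hg, mul_assoc]
  · intro m
    simp [← hσB, ← hf, hfω]
  · intro m
    simp [hσC, ← hg, hgω, h_lr]
end
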